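/- Let (X,d,μ) be a metric measure space and B_0 a ball of radius r_0 such that μ(B(x,r)) ≥ b r^Q for all B(x,r) ⊆ 2B_0, with 0 < sp < Q. Let u ∈ L^0(2B_0) have a fractional s-gradient (g_j) with ‖(g_j)‖_{L^p(2B_0, ℓ^q)} < ∞, 0 < q < ∞. Then u ∈ L^{p*}(B_0) with p* = Qp/(Q − sp), and inf_{c∈ℝ} (⨍_{B_0} |u − c|^{p*} dμ)^{1/p*} ≤ C (μ(2B_0)/(b r_0^Q))^{1/p} r_0^s (⨍_{2B_0} (∑_{j∈ℤ} g_j^q)^{p/q} dμ)^{1/p}, where C depends only on s, p, q, Q. -/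

import Mathlib

open Metric MeasureTheory
open scoped ENNReal

/-- `(g k)` is a fractional `s`-gradient of `u` on `S`. -/
def IsFractionalSGradient {X : Type*} [MetricSpace X] [MeasurableSpace X]
    (μ : Measure X) (S : Set X) (s : ℝ) (u : X → ℝ) (g : ℤ → X → ℝ) : Prop :=
  (∀ k x, 0 ≤ g k x) ∧
  ∃ E : Set X, E ⊆ S ∧ μ E = 0 ∧
    ∀ (k : ℤ), ∀ x ∈ S \ E, ∀ y ∈ S \ E,
      2 ^ ((k : ℝ) - 1) ≤ dist x y → dist x y < 2 ^ (k : ℝ) →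
      |u x - u y| ≤ dist x y ^ s * (g k x + g k y)

/-!
Only the pointwise inequality `|u x - u y| ≤ d(x, y)^s (G x + G y)` with `G = (∑ g_j^q)^{1/q}`
matters. Fix a level `τ` with `∫_{2B₀} G^p < b ((1 - ρ) r₀)^Q τ^p`, where `ρ = 2^{-p/Q}`. By the
lower measure bound, every ball of radius `(1 - ρ) r₀ ρ^n` inside `2B₀` contains a point where
`G < 2^n τ`. Starting from `x ∈ B₀` with `G x ≤ 2^n τ` one can thus move through points at levels
`2^{n-1} τ, …, τ` while staying inside `2B₀`; the steps change `u` by a geometric progression of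
ratio `β = 2 ρ^s > 1`, so `|u x - c| ≲ τ r₀^s β^n` for a fixed value `c`. As `β^{p*} = 2^p`, this
reads `|u x - c|^{p*} ≲ (τ r₀^s)^{p*} (1 + (G x / τ)^p)`, which is integrated over `B₀`. Finally `τ`
decreases to its critical value. The `g_j` may fail to be measurable; `∫⁻` is then a lower integral,
which is still monotone and homogeneous.
-/

/-- The Sobolev conjugate exponent `p* = Qp / (Q - sp)`. -/
noncomputable def sobolevExponent (s p Q : ℝ) : ℝ := Q * p / (Q - s * p)

/-- The ratio `ρ` of consecutive radii in a chain. It is chosen so that `ρ ^ Q = 2 ^ (-p)`: when the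
radius shrinks by `ρ`, Chebyshev's inequality loses a factor `2` in the level of the gradient. -/
noncomputable def radiusRatio (p Q : ℝ) : ℝ := 2 ^ (-(p / Q))

/-- The factor `β` by which the oscillation bound grows when the level of the gradient doubles
and the radius shrinks by `radiusRatio p Q`. -/
noncomputable def oscillationRatio (s p Q : ℝ) : ℝ := 2 * radiusRatio p Q ^ s

/-- The constant in the oscillation bound along chains. The term `2 * 4 ^ s` compares two points of
`2B₀` at the lowest level; the second term sums the geometric progression of the chain. -/
noncomputable def oscillationConst (s p Q : ℝ) : ℝ :=
  2 * 4 ^ s + 3 / (oscillationRatio s p Q - 1)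

/-- The constant in the Sobolev–Poincaré inequality. -/
noncomputable def sobolevPoincareConst (s p Q : ℝ) : ℝ :=
  oscillationConst s p Q * (1 + 2 ^ p) ^ (sobolevExponent s p Q)⁻¹ *
    ((1 - radiusRatio p Q) ^ Q)⁻¹ ^ p⁻¹

section Constants

variable {s p Q : ℝ}

lemma sobolevExponent_pos (hp : 0 < p) (hQ : 0 < Q) (hspQ : s * p < Q) :
    0 < sobolevExponent s p Q :=
  div_pos (mul_pos hQ hp) (sub_pos.2 hspQ)

lemma inv_sobolevExponent : (sobolevExponent s p Q)⁻¹ = (Q - s * p) / (Q * p) :=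
  inv_div _ _

lemma radiusRatio_pos : 0 < radiusRatio p Q := by
  unfold radiusRatio; positivity

lemma radiusRatio_lt_one (hp : 0 < p) (hQ : 0 < Q) : radiusRatio p Q < 1 :=
  Real.rpow_lt_one_of_one_lt_of_neg one_lt_two (neg_neg_of_pos (div_pos hp hQ))

lemma radiusRatio_rpow (hQ : 0 < Q) : radiusRatio p Q ^ Q = (2 ^ p)⁻¹ := by
  rw [radiusRatio, ← Real.rpow_mul zero_le_two, neg_mul, div_mul_cancel₀ _ hQ.ne',
    Real.rpow_neg zero_le_two]

lemma chain_radius_rpow_mul_level_rpow {θ r₀ τ : ℝ} (hθ : 0 ≤ θ) (hr₀ : 0 ≤ r₀) (hτ : 0 ≤ τ)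
    (hQ : 0 < Q) (n : ℕ) :
    (θ * r₀ * radiusRatio p Q ^ n) ^ Q * (τ * 2 ^ n) ^ p = (θ * r₀) ^ Q * τ ^ p := by
  have hρ : 0 < radiusRatio p Q := radiusRatio_pos
  rw [Real.mul_rpow (by positivity) (by positivity), Real.mul_rpow hτ (by positivity),
    ← Real.rpow_pow_comm hρ.le, ← Real.rpow_pow_comm zero_le_two, radiusRatio_rpow hQ, inv_pow]
  field_simp

lemma oscillationRatio_eq_rpow : oscillationRatio s p Q = 2 ^ (1 - s * p / Q) := by
  rw [oscillationRatio, radiusRatio, ← Real.rpow_mul zero_le_two, sub_eq_add_neg,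
    Real.rpow_add two_pos, Real.rpow_one]
  ring_nf

lemma one_lt_oscillationRatio (hQ : 0 < Q) (hspQ : s * p < Q) : 1 < oscillationRatio s p Q := by
  rw [oscillationRatio_eq_rpow]
  exact Real.one_lt_rpow one_lt_two (sub_pos.2 ((div_lt_one hQ).2 hspQ))

lemma oscillationRatio_rpow_sobolevExponent (hQ : 0 < Q) (hspQ : s * p < Q) :
    oscillationRatio s p Q ^ sobolevExponent s p Q = 2 ^ p := by
  have : Q - s * p ≠ 0 := (sub_pos.2 hspQ).ne'
  rw [oscillationRatio_eq_rpow, ← Real.rpow_mul zero_le_two, sobolevExponent]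
  congr 1
  field_simp

lemma chain_step_oscillation_le {θ r₀ τ : ℝ} (hs : 0 ≤ s) (hr₀ : 0 ≤ r₀) (hτ : 0 ≤ τ) (hθ : 0 ≤ θ)
    (hθ1 : θ ≤ 1) (n : ℕ) :
    (θ * r₀ * radiusRatio p Q ^ n) ^ s * (τ * 2 ^ (n + 1) + τ * 2 ^ n) ≤
      3 * τ * r₀ ^ s * oscillationRatio s p Q ^ n := by
  have hρ : 0 < radiusRatio p Q := radiusRatio_pos
  calc _ ≤ (r₀ * radiusRatio p Q ^ n) ^ s * (τ * 2 ^ (n + 1) + τ * 2 ^ n) := by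
        gcongr
        exact mul_le_of_le_one_left hr₀ hθ1
    _ = _ := by
      rw [Real.mul_rpow hr₀ (by positivity), ← Real.rpow_pow_comm hρ.le, oscillationRatio, mul_pow]
      ring

lemma oscillationConst_pos (hQ : 0 < Q) (hspQ : s * p < Q) : 0 < oscillationConst s p Q := by
  have := sub_pos.2 (one_lt_oscillationRatio hQ hspQ)
  unfold oscillationConst
  positivity

lemma three_add_oscillationConst_le (hQ : 0 < Q) (hspQ : s * p < Q) :
    3 + oscillationConst s p Q ≤ oscillationConst s p Q * oscillationRatio s p Q := by
  have hβ := sub_pos.2 (one_lt_oscillationRatio hQ hspQ)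
  have h3 : 3 ≤ oscillationConst s p Q * (oscillationRatio s p Q - 1) := by
    rw [← div_le_iff₀ hβ, oscillationConst]
    exact le_add_of_nonneg_left (by positivity)
  linarith

lemma sobolevPoincareConst_pos (hp : 0 < p) (hQ : 0 < Q) (hspQ : s * p < Q) :
    0 < sobolevPoincareConst s p Q := by
  have := oscillationConst_pos hQ hspQ
  have := sub_pos.2 (radiusRatio_lt_one hp hQ)
  unfold sobolevPoincareConst
  positivity

end Constants

lemma exists_le_two_pow_le_max {a : ℝ≥0∞} (ha : a ≠ ⊤) :
    ∃ n : ℕ, a ≤ 2 ^ n ∧ 2 ^ n ≤ max 1 (2 * a) := by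
  lift a to NNReal using ha
  rcases le_total a 1 with ha | ha
  · exact ⟨0, by simpa using ha, by simp⟩
  · obtain ⟨n, hna, han⟩ := exists_nat_pow_near ha one_lt_two
    refine ⟨n + 1, mod_cast han.le, le_max_of_le_right ?_⟩
    rw [pow_succ']
    gcongr
    exact_mod_cast hna

lemma exists_mem_sdiff_lt_of_setLIntegral_lt {X : Type*} [MeasurableSpace X] {μ : Measure X}
    {M E : Set X} {F : X → ℝ≥0∞} {t : ℝ≥0∞} (hM : MeasurableSet M) (hE : μ E = 0)
    (hF : ∫⁻ x in M, F x ∂μ < t * μ M) : ∃ y ∈ M \ E, F y < t := by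
  by_contra! hcon
  refine hF.not_ge ?_
  rw [← setLIntegral_const]
  refine setLIntegral_mono_ae' hM ?_
  filter_upwards [measure_eq_zero_iff_ae_notMem.1 hE] with x hxE hxM
  exact hcon x ⟨hxM, hxE⟩

/-- The lower mass bound `μ(B(x, r)) ≥ b r ^ Q` for all balls `B(x, r) ⊆ S`. -/
def HasLowerMeasureBound {X : Type*} [PseudoMetricSpace X] [MeasurableSpace X]
    (μ : Measure X) (S : Set X) (b Q : ℝ) : Prop :=
  ∀ (x : X) (r : ℝ), 0 < r → ball x r ⊆ S → ENNReal.ofReal (b * r ^ Q) ≤ μ (ball x r)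

/-- `G` is a Hajłasz `s`-gradient of `u` on `S`: the Hölder-type inequality with weight `G x + G y`
holds off a null set. Here `G` may be non-measurable or infinite. -/
def IsHajlaszGradient {X Y : Type*} [PseudoEMetricSpace X] [MeasurableSpace X]
    [PseudoEMetricSpace Y] (μ : Measure X) (S : Set X) (s : ℝ) (u : X → Y) (G : X → ℝ≥0∞) : Prop :=
  ∃ E : Set X, μ E = 0 ∧ ∀ x ∈ S \ E, ∀ y ∈ S \ E,
    edist (u x) (u y) ≤ edist x y ^ s * (G x + G y)

lemma le_tsum_rpow_rpow_inv {ι : Type*} {q : ℝ} (hq : 0 < q) (a : ι → ℝ≥0∞) (i : ι) :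
    a i ≤ (∑' j, a j ^ q) ^ q⁻¹ :=
  (ENNReal.le_rpow_inv_iff hq).2 (ENNReal.le_tsum i)

lemma IsFractionalSGradient.isHajlaszGradient {X : Type*} [MetricSpace X] [MeasurableSpace X]
    {μ : Measure X} {S : Set X} {s q : ℝ} {u : X → ℝ} {g : ℤ → X → ℝ} (hq : 0 < q)
    (hg : IsFractionalSGradient μ S s u g) :
    IsHajlaszGradient μ S s u fun x => (∑' j, ENNReal.ofReal (g j x) ^ q) ^ q⁻¹ := by
  obtain ⟨hg0, E, -, hE, hgE⟩ := hg
  refine ⟨E, hE, fun x hx y hy => ?_⟩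
  rcases eq_or_ne x y with rfl | hxy
  · simp
  have hd : 0 < dist x y := dist_pos.2 hxy
  obtain ⟨k, hkl, hku⟩ := exists_mem_Ico_zpow hd one_lt_two
  have hk : |u x - u y| ≤ dist x y ^ s * (g (k + 1) x + g (k + 1) y) :=
    hgE (k + 1) x hx y hy (by simpa using hkl) (by exact_mod_cast hku)
  calc edist (u x) (u y) = ENNReal.ofReal |u x - u y| := by rw [edist_dist, Real.dist_eq]
    _ ≤ ENNReal.ofReal (dist x y ^ s * (g (k + 1) x + g (k + 1) y)) := ENNReal.ofReal_le_ofReal hk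
    _ = edist x y ^ s * (ENNReal.ofReal (g (k + 1) x) + ENNReal.ofReal (g (k + 1) y)) := by
      rw [ENNReal.ofReal_mul (by positivity), ENNReal.ofReal_add (hg0 _ _) (hg0 _ _), edist_dist,
        ENNReal.ofReal_rpow_of_pos hd]
    _ ≤ _ := by
      gcongr
      · exact le_tsum_rpow_rpow_inv hq (fun j => ENNReal.ofReal (g j x)) (k + 1)
      · exact le_tsum_rpow_rpow_inv hq (fun j => ENNReal.ofReal (g j y)) (k + 1)

lemma dist_le_rpow_mul_of_edist_le {X Y : Type*} [PseudoMetricSpace X] [PseudoMetricSpace Y]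
    {u : X → Y} {G : X → ℝ≥0∞} {x y : X} {s r t t' : ℝ} (hs : 0 ≤ s) (ht : 0 ≤ t) (ht' : 0 ≤ t')
    (hu : edist (u x) (u y) ≤ edist x y ^ s * (G x + G y)) (hr : dist x y ≤ r)
    (hx : G x ≤ ENNReal.ofReal t) (hy : G y ≤ ENNReal.ofReal t') :
    dist (u x) (u y) ≤ r ^ s * (t + t') := by
  have hr0 : 0 ≤ r := dist_nonneg.trans hr
  rw [← ENNReal.ofReal_le_ofReal_iff (by positivity), ← edist_dist,
    ENNReal.ofReal_mul (by positivity), ENNReal.ofReal_add ht ht',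
    ← ENNReal.ofReal_rpow_of_nonneg hr0 hs]
  refine hu.trans ?_
  rw [edist_dist]
  gcongr

lemma edist_rpow_sobolevExponent_le {Y : Type*} [PseudoMetricSpace Y] {v w : Y} {K : ℝ≥0∞}
    {s p Q A τ : ℝ} (hA : 0 < A) (hp : 0 < p) (hQ : 0 < Q) (hspQ : s * p < Q) (hτ : 0 < τ)
    (h : ∀ n : ℕ, K ≤ ENNReal.ofReal (τ * 2 ^ n) → dist v w ≤ A * oscillationRatio s p Q ^ n) :
    edist v w ^ sobolevExponent s p Q ≤
      ENNReal.ofReal A ^ sobolevExponent s p Q * (1 + (2 / ENNReal.ofReal τ * K) ^ p) := by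
  set P := sobolevExponent s p Q with hPdef
  have hP : 0 < P := sobolevExponent_pos hp hQ hspQ
  have hβ := zero_lt_one.trans (one_lt_oscillationRatio hQ hspQ)
  have hτ0 : ENNReal.ofReal τ ≠ 0 := (ENNReal.ofReal_pos.2 hτ).ne'
  have hτt : ENNReal.ofReal τ ≠ ⊤ := ENNReal.ofReal_ne_top
  rcases eq_or_ne K ⊤ with rfl | hK
  · have hAP : ENNReal.ofReal A ^ P ≠ 0 := by simp [hA]
    simp [ENNReal.mul_top, ENNReal.top_rpow_of_pos hp, hAP, hτt]
  obtain ⟨n, hKn, hnK⟩ := exists_le_two_pow_le_max (ENNReal.div_ne_top hK hτ0)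
  have hdist : dist v w ≤ A * oscillationRatio s p Q ^ n := by
    refine h n ?_
    rwa [ENNReal.div_le_iff' hτ0 hτt, ← ENNReal.ofReal_ofNat, ← ENNReal.ofReal_pow zero_le_two,
      ← ENNReal.ofReal_mul hτ.le] at hKn
  have hpow : (A * oscillationRatio s p Q ^ n) ^ P = A ^ P * (2 ^ n) ^ p := by
    rw [Real.mul_rpow hA.le (by positivity), ← Real.rpow_pow_comm hβ.le, hPdef,
      oscillationRatio_rpow_sobolevExponent hQ hspQ, Real.rpow_pow_comm zero_le_two]
  calc edist v w ^ P ≤ ENNReal.ofReal (A * oscillationRatio s p Q ^ n) ^ P := by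
        rw [edist_dist]; gcongr
    _ = ENNReal.ofReal A ^ P * (2 ^ n) ^ p := by
      rw [ENNReal.ofReal_rpow_of_nonneg (by positivity) hP.le, hpow,
        ENNReal.ofReal_mul (by positivity), ← ENNReal.ofReal_rpow_of_nonneg hA.le hP.le,
        ← ENNReal.ofReal_rpow_of_nonneg (by positivity) hp.le, ENNReal.ofReal_pow zero_le_two,
        ENNReal.ofReal_ofNat]
    _ ≤ ENNReal.ofReal A ^ P * max 1 (2 * (K / ENNReal.ofReal τ)) ^ p := by gcongr
    _ ≤ _ := by
      rw [(ENNReal.monotone_rpow_of_nonneg hp.le).map_max, ENNReal.one_rpow,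
        ENNReal.mul_comm_div]
      gcongr
      exact max_le_add_of_nonneg zero_le_one zero_le

section Chain

variable {X Y : Type*} [PseudoMetricSpace X] [MeasurableSpace X] [PseudoMetricSpace Y]
  {μ : Measure X} {x₀ : X} {r₀ b s p Q τ : ℝ} {u : X → Y} {G : X → ℝ≥0∞} {E : Set X}

lemma HasLowerMeasureBound.measure_ball_ne_zero {S : Set X} {x : X} {r : ℝ}
    (hμ : HasLowerMeasureBound μ S b Q) (hb : 0 < b) (hr : 0 < r) (hxS : ball x r ⊆ S) :
    μ (ball x r) ≠ 0 :=
  ((ENNReal.ofReal_pos.2 (by positivity)).trans_le (hμ x r hr hxS)).ne'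

lemma HasLowerMeasureBound.lintegral_div_mul_rpow_le {S : Set X} {x : X} {r : ℝ} {a : ℝ≥0∞}
    (hμ : HasLowerMeasureBound μ S b Q) (hp : 0 < p) (hτ : 0 < τ) (hr : 0 < r) (ha : a ≠ ⊤)
    (hxS : ball x r ⊆ S) (hG : ∫⁻ x in S, G x ^ p ∂μ ≤ ENNReal.ofReal (b * r ^ Q * τ ^ p)) :
    ∫⁻ x in ball x r, (a / ENNReal.ofReal τ * G x) ^ p ∂μ ≤ a ^ p * μ (ball x r) := by
  have hτ0 : ENNReal.ofReal τ ≠ 0 := (ENNReal.ofReal_pos.2 hτ).ne'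
  have haτ : (a / ENNReal.ofReal τ) ^ p ≠ ⊤ :=
    ENNReal.rpow_ne_top_of_nonneg hp.le (ENNReal.div_ne_top ha hτ0)
  calc ∫⁻ x in ball x r, (a / ENNReal.ofReal τ * G x) ^ p ∂μ
      = (a / ENNReal.ofReal τ) ^ p * ∫⁻ x in ball x r, G x ^ p ∂μ := by
        simp_rw [ENNReal.mul_rpow_of_nonneg _ _ hp.le]
        rw [lintegral_const_mul' _ _ haτ]
    _ ≤ (a / ENNReal.ofReal τ) ^ p * (ENNReal.ofReal τ ^ p * ENNReal.ofReal (b * r ^ Q)) := by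
      rw [ENNReal.ofReal_rpow_of_pos hτ, mul_comm (ENNReal.ofReal _),
        ← ENNReal.ofReal_mul' (by positivity)]
      gcongr
      exact (lintegral_mono_set hxS).trans hG
    _ = a ^ p * ENNReal.ofReal (b * r ^ Q) := by
      rw [← mul_assoc, ← ENNReal.mul_rpow_of_nonneg _ _ hp.le,
        ENNReal.div_mul_cancel hτ0 ENNReal.ofReal_ne_top]
    _ ≤ _ := by gcongr; exact hμ x r hr hxS

variable [OpensMeasurableSpace X]

lemma HasLowerMeasureBound.exists_mem_ball_sdiff_lt {S : Set X} {x : X} {r t : ℝ}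
    (hμ : HasLowerMeasureBound μ S b Q) (hp : 0 < p) (ht : 0 < t) (hr : 0 < r)
    (hE : μ E = 0) (hxS : ball x r ⊆ S)
    (hG : ∫⁻ x in S, G x ^ p ∂μ < ENNReal.ofReal (b * r ^ Q * t ^ p)) :
    ∃ y ∈ ball x r \ E, G y < ENNReal.ofReal t := by
  have hlt : ∫⁻ x in ball x r, G x ^ p ∂μ < ENNReal.ofReal t ^ p * μ (ball x r) :=
    calc _ ≤ ∫⁻ x in S, G x ^ p ∂μ := lintegral_mono_set hxS
      _ < ENNReal.ofReal (b * r ^ Q * t ^ p) := hG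
      _ = ENNReal.ofReal t ^ p * ENNReal.ofReal (b * r ^ Q) := by
        rw [ENNReal.ofReal_mul' (by positivity), ENNReal.ofReal_rpow_of_pos ht, mul_comm]
      _ ≤ _ := by gcongr; exact hμ x r hr hxS
  obtain ⟨y, hy, hyt⟩ := exists_mem_sdiff_lt_of_setLIntegral_lt measurableSet_ball hE hlt
  exact ⟨y, hy, (ENNReal.rpow_lt_rpow_iff hp).1 hyt⟩

lemma exists_mem_chain_ball_sdiff_lt (hμ : HasLowerMeasureBound μ (ball x₀ (2 * r₀)) b Q)
    (hp : 0 < p) (hQ : 0 < Q) (hr₀ : 0 < r₀) (hτ : 0 < τ) (hE : μ E = 0)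
    (hG : ∫⁻ x in ball x₀ (2 * r₀), G x ^ p ∂μ <
      ENNReal.ofReal (b * ((1 - radiusRatio p Q) * r₀) ^ Q * τ ^ p)) {n : ℕ} {x : X}
    (hx : dist x x₀ ≤ r₀ * (1 + radiusRatio p Q ^ (n + 1))) :
    ∃ y ∈ ball x₀ (2 * r₀) \ E, dist x y < (1 - radiusRatio p Q) * r₀ * radiusRatio p Q ^ n ∧
      G y ≤ ENNReal.ofReal (τ * 2 ^ n) := by
  have hρ : 0 < radiusRatio p Q := radiusRatio_pos
  have hθ := sub_pos.2 (radiusRatio_lt_one hp hQ)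
  have hsub : ball x ((1 - radiusRatio p Q) * r₀ * radiusRatio p Q ^ n) ⊆ ball x₀ (2 * r₀) := by
    have hρn : radiusRatio p Q ^ n ≤ 1 := pow_le_one₀ hρ.le (radiusRatio_lt_one hp hQ).le
    apply ball_subset_ball'
    calc _ ≤ r₀ * (1 + radiusRatio p Q ^ n) := by rw [pow_succ] at hx; linarith
      _ ≤ _ := by nlinarith
  obtain ⟨y, ⟨hyx, hyE⟩, hGy⟩ := hμ.exists_mem_ball_sdiff_lt (t := τ * 2 ^ n) hp (by positivity)
    (by positivity) hE hsub
    (by rwa [mul_assoc, chain_radius_rpow_mul_level_rpow hθ.le hr₀.le hτ.le hQ, ← mul_assoc])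
  exact ⟨y, ⟨hsub hyx, hyE⟩, mem_ball'.1 hyx, hGy.le⟩

lemma dist_le_oscillationConst_mul (hμ : HasLowerMeasureBound μ (ball x₀ (2 * r₀)) b Q)
    (hs : 0 < s) (hp : 0 < p) (hspQ : s * p < Q) (hr₀ : 0 < r₀) (hτ : 0 < τ)
    (hE : μ E = 0)
    (hu : ∀ x ∈ ball x₀ (2 * r₀) \ E, ∀ y ∈ ball x₀ (2 * r₀) \ E,
      edist (u x) (u y) ≤ edist x y ^ s * (G x + G y))
    (hG : ∫⁻ x in ball x₀ (2 * r₀), G x ^ p ∂μ <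
      ENNReal.ofReal (b * ((1 - radiusRatio p Q) * r₀) ^ Q * τ ^ p)) {y₀ : X}
    (hy₀ : y₀ ∈ ball x₀ (2 * r₀) \ E) (hGy₀ : G y₀ ≤ ENNReal.ofReal τ) {n : ℕ} {x : X}
    (hx : x ∈ ball x₀ (2 * r₀) \ E) (hxn : dist x x₀ ≤ r₀ * (1 + radiusRatio p Q ^ n))
    (hGx : G x ≤ ENNReal.ofReal (τ * 2 ^ n)) :
    dist (u x) (u y₀) ≤ oscillationConst s p Q * τ * r₀ ^ s * oscillationRatio s p Q ^ n := by
  have hQ : 0 < Q := (mul_pos hs hp).trans hspQ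
  have hβ := one_lt_oscillationRatio hQ hspQ
  induction n generalizing x with
  | zero =>
    have hxy₀ : dist x y₀ ≤ 4 * r₀ := by
      linarith [dist_triangle_right x y₀ x₀, mem_ball.1 hx.1, mem_ball.1 hy₀.1]
    calc dist (u x) (u y₀) ≤ (4 * r₀) ^ s * (τ + τ) :=
          dist_le_rpow_mul_of_edist_le hs.le hτ.le hτ.le (hu x hx y₀ hy₀) hxy₀ (by simpa using hGx)
            hGy₀
      _ = 2 * 4 ^ s * τ * r₀ ^ s := by rw [Real.mul_rpow (by norm_num) hr₀.le]; ring
      _ ≤ _ := by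
        rw [pow_zero, mul_one, oscillationConst]
        have := sub_pos.2 hβ
        gcongr
        exact le_add_of_nonneg_right (by positivity)
  | succ n ih =>
    have hθ := sub_pos.2 (radiusRatio_lt_one hp hQ)
    obtain ⟨z, hz, hxz, hGz⟩ := exists_mem_chain_ball_sdiff_lt hμ hp hQ hr₀ hτ hE hG hxn
    have hzn : dist z x₀ ≤ r₀ * (1 + radiusRatio p Q ^ n) := by
      rw [pow_succ] at hxn
      linarith [dist_triangle_left z x₀ x]
    calc dist (u x) (u y₀) ≤ dist (u x) (u z) + dist (u z) (u y₀) := dist_triangle _ _ _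
      _ ≤ 3 * τ * r₀ ^ s * oscillationRatio s p Q ^ n +
          oscillationConst s p Q * τ * r₀ ^ s * oscillationRatio s p Q ^ n := by
        gcongr
        · exact (dist_le_rpow_mul_of_edist_le hs.le (by positivity) (by positivity)
            (hu x hx z hz) hxz.le hGx hGz).trans
            (chain_step_oscillation_le hs.le hr₀.le hτ.le hθ.le
              (sub_le_self 1 radiusRatio_pos.le) n)
        · exact ih hz hzn hGz
      _ = (3 + oscillationConst s p Q) * (τ * r₀ ^ s * oscillationRatio s p Q ^ n) := by ring
      _ ≤ oscillationConst s p Q * oscillationRatio s p Q *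
          (τ * r₀ ^ s * oscillationRatio s p Q ^ n) := by
        gcongr
        exact three_add_oscillationConst_le hQ hspQ
      _ = _ := by ring

theorem IsHajlaszGradient.exists_ae_edist_rpow_le
    (hu : IsHajlaszGradient μ (ball x₀ (2 * r₀)) s u G)
    (hμ : HasLowerMeasureBound μ (ball x₀ (2 * r₀)) b Q) (hs : 0 < s) (hp : 0 < p)
    (hspQ : s * p < Q) (hr₀ : 0 < r₀) (hτ : 0 < τ)
    (hG : ∫⁻ x in ball x₀ (2 * r₀), G x ^ p ∂μ <
      ENNReal.ofReal (b * ((1 - radiusRatio p Q) * r₀) ^ Q * τ ^ p)) :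
    ∃ c, ∀ᵐ x ∂μ.restrict (ball x₀ r₀), edist (u x) c ^ sobolevExponent s p Q ≤
      ENNReal.ofReal (oscillationConst s p Q * τ * r₀ ^ s) ^ sobolevExponent s p Q *
        (1 + (2 / ENNReal.ofReal τ * G x) ^ p) := by
  obtain ⟨E, hE, hu⟩ := hu
  have hQ : 0 < Q := (mul_pos hs hp).trans hspQ
  have hC := oscillationConst_pos hQ hspQ
  have hρ : 0 < radiusRatio p Q := radiusRatio_pos
  obtain ⟨y₀, hy₀, -, hGy₀⟩ := exists_mem_chain_ball_sdiff_lt (x := x₀) (n := 0) hμ hp hQ hr₀ hτ hE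
    hG (by rw [dist_self]; positivity)
  refine ⟨u y₀, (ae_restrict_iff' measurableSet_ball).2 ?_⟩
  filter_upwards [measure_eq_zero_iff_ae_notMem.1 hE] with x hxE hx
  refine edist_rpow_sobolevExponent_le (by positivity) hp hQ hspQ hτ fun n hn => ?_
  refine dist_le_oscillationConst_mul hμ hs hp hspQ hr₀ hτ hE hu hG hy₀ (by simpa using hGy₀)
    ⟨ball_subset_ball (by linarith) hx, hxE⟩ ?_ hn
  nlinarith [mem_ball.1 hx, pow_pos hρ n]

theorem IsHajlaszGradient.exists_lintegral_edist_rpow_le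
    (hu : IsHajlaszGradient μ (ball x₀ (2 * r₀)) s u G)
    (hμ : HasLowerMeasureBound μ (ball x₀ (2 * r₀)) b Q) (hs : 0 < s) (hp : 0 < p)
    (hspQ : s * p < Q) (hr₀ : 0 < r₀) (hb : 0 ≤ b) (hτ : 0 < τ)
    (hG : ∫⁻ x in ball x₀ (2 * r₀), G x ^ p ∂μ <
      ENNReal.ofReal (b * ((1 - radiusRatio p Q) * r₀) ^ Q * τ ^ p)) :
    ∃ c, ∫⁻ x in ball x₀ r₀, edist (u x) c ^ sobolevExponent s p Q ∂μ ≤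
      ENNReal.ofReal (oscillationConst s p Q * τ * r₀ ^ s) ^ sobolevExponent s p Q *
        (1 + 2 ^ p) * μ (ball x₀ r₀) := by
  have hQ : 0 < Q := (mul_pos hs hp).trans hspQ
  have hP := sobolevExponent_pos hp hQ hspQ
  obtain ⟨c, hc⟩ := hu.exists_ae_edist_rpow_le hμ hs hp hspQ hr₀ hτ hG
  have hlevel : ENNReal.ofReal (b * ((1 - radiusRatio p Q) * r₀) ^ Q * τ ^ p) ≤
      ENNReal.ofReal (b * r₀ ^ Q * τ ^ p) := by
    have hθ := sub_pos.2 (radiusRatio_lt_one hp hQ)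
    gcongr
    exact mul_le_of_le_one_left hr₀.le (sub_le_self 1 radiusRatio_pos.le)
  have hscaled : ∫⁻ x in ball x₀ r₀, (2 / ENNReal.ofReal τ * G x) ^ p ∂μ ≤
      2 ^ p * μ (ball x₀ r₀) :=
    hμ.lintegral_div_mul_rpow_le hp hτ hr₀ ENNReal.ofNat_ne_top (ball_subset_ball (by linarith))
      (hG.le.trans hlevel)
  refine ⟨c, (lintegral_mono_ae hc).trans ?_⟩
  rw [lintegral_const_mul' _ _ (by finiteness), lintegral_add_left measurable_const,
    setLIntegral_one, mul_assoc (_ ^ _), one_add_mul]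
  gcongr

end Chain

lemma lt_ofReal_mul_rpow_of_rpow_inv_lt {I : ℝ≥0∞} {w p τ : ℝ} (hI : I ≠ ⊤) (hw : 0 < w)
    (hp : 0 < p) (hτ : (I.toReal / w) ^ p⁻¹ < τ) : I < ENNReal.ofReal (w * τ ^ p) := by
  have hτ0 : 0 < τ := lt_of_le_of_lt (by positivity) hτ
  rw [Real.rpow_inv_lt_iff_of_pos (by positivity) hτ0.le hp, div_lt_iff₀' hw] at hτ
  exact (ENNReal.lt_ofReal_iff_toReal_lt hI).2 hτ

lemma toReal_average_rpow_inv_le {I κ m : ℝ≥0∞} {A P : ℝ} (hA : 0 ≤ A) (hP : 0 < P) (hm₀ : m ≠ 0)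
    (hm : m ≠ ⊤) (hκ : κ ≠ ⊤) (hI : I ≤ ENNReal.ofReal A ^ P * κ * m) :
    (m.toReal⁻¹ * I.toReal) ^ P⁻¹ ≤ A * κ.toReal ^ P⁻¹ := by
  have hmpos : 0 < m.toReal := ENNReal.toReal_pos hm₀ hm
  have hIreal : I.toReal ≤ A ^ P * κ.toReal * m.toReal := by
    have := ENNReal.toReal_mono (by finiteness) hI
    rwa [ENNReal.toReal_mul, ENNReal.toReal_mul, ← ENNReal.toReal_rpow,
      ENNReal.toReal_ofReal hA] at this
  calc (m.toReal⁻¹ * I.toReal) ^ P⁻¹ ≤ (A ^ P * κ.toReal) ^ P⁻¹ := by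
        refine Real.rpow_le_rpow (by positivity) ?_ (by positivity)
        rwa [inv_mul_le_iff₀' hmpos]
    _ = A * κ.toReal ^ P⁻¹ := by
      rw [Real.mul_rpow (by positivity) (by positivity), Real.rpow_rpow_inv hA hP.ne']

section Embedding

variable {X : Type*} [PseudoMetricSpace X] [MeasurableSpace X] [OpensMeasurableSpace X]
  {μ : Measure X} {x₀ : X} {r₀ b s p Q : ℝ} {G : X → ℝ≥0∞}

theorem IsHajlaszGradient.memLp_sobolevExponent {F : Type*} [NormedAddCommGroup F] {u : X → F}
    (hG : IsHajlaszGradient μ (ball x₀ (2 * r₀)) s u G)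
    (hμ : HasLowerMeasureBound μ (ball x₀ (2 * r₀)) b Q) (hs : 0 < s) (hp : 0 < p)
    (hspQ : s * p < Q) (hr₀ : 0 < r₀) (hb : 0 < b)
    (hu : AEStronglyMeasurable u (μ.restrict (ball x₀ r₀))) (hfin : μ (ball x₀ r₀) ≠ ⊤)
    (hGp : ∫⁻ x in ball x₀ (2 * r₀), G x ^ p ∂μ ≠ ⊤) :
    MemLp u (ENNReal.ofReal (sobolevExponent s p Q)) (μ.restrict (ball x₀ r₀)) := by
  have hQ : 0 < Q := (mul_pos hs hp).trans hspQ
  have hP := sobolevExponent_pos hp hQ hspQ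
  have hθ := sub_pos.2 (radiusRatio_lt_one hp hQ)
  obtain ⟨c, hc⟩ := hG.exists_lintegral_edist_rpow_le hμ hs hp hspQ hr₀ hb.le
    (lt_of_le_of_lt (by positivity) (lt_add_one _))
    (lt_ofReal_mul_rpow_of_rpow_inv_lt hGp (by positivity) hp (lt_add_one _))
  have : IsFiniteMeasure (μ.restrict (ball x₀ r₀)) := ⟨by simpa using hfin.lt_top⟩
  have hsub : MemLp (fun x => u x - c) (ENNReal.ofReal (sobolevExponent s p Q))
      (μ.restrict (ball x₀ r₀)) := by
    refine ⟨hu.sub aestronglyMeasurable_const, ?_⟩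
    rw [eLpNorm_lt_top_iff_lintegral_rpow_enorm_lt_top (by simpa using hP) ENNReal.ofReal_ne_top,
      ENNReal.toReal_ofReal hP.le]
    simp_rw [← edist_eq_enorm_sub]
    exact hc.trans_lt (by finiteness)
  simpa [Pi.add_def] using hsub.add (memLp_const c)

theorem IsHajlaszGradient.iInf_average_edist_rpow_le_mul_level {Y : Type*} [PseudoMetricSpace Y]
    {u : X → Y} {τ : ℝ} (hG : IsHajlaszGradient μ (ball x₀ (2 * r₀)) s u G)
    (hμ : HasLowerMeasureBound μ (ball x₀ (2 * r₀)) b Q) (hs : 0 < s) (hp : 0 < p)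
    (hspQ : s * p < Q) (hr₀ : 0 < r₀) (hb : 0 < b) (hfin : μ (ball x₀ r₀) ≠ ⊤) (hτ : 0 < τ)
    (hGτ : ∫⁻ x in ball x₀ (2 * r₀), G x ^ p ∂μ <
      ENNReal.ofReal (b * ((1 - radiusRatio p Q) * r₀) ^ Q * τ ^ p)) :
    (⨅ c : Y, ((μ (ball x₀ r₀)).toReal⁻¹ *
        (∫⁻ x in ball x₀ r₀, edist (u x) c ^ sobolevExponent s p Q ∂μ).toReal) ^
          (sobolevExponent s p Q)⁻¹) ≤
      oscillationConst s p Q * τ * r₀ ^ s * (1 + 2 ^ p) ^ (sobolevExponent s p Q)⁻¹ := by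
  have hQ : 0 < Q := (mul_pos hs hp).trans hspQ
  have hC := oscillationConst_pos hQ hspQ
  have hB : μ (ball x₀ r₀) ≠ 0 :=
    hμ.measure_ball_ne_zero hb hr₀ (ball_subset_ball (by linarith))
  have htwo : (1 + 2 ^ p : ℝ≥0∞) ≠ ⊤ := by finiteness
  have htoReal : (1 + 2 ^ p : ℝ≥0∞).toReal = 1 + 2 ^ p := by
    rw [ENNReal.toReal_add ENNReal.one_ne_top (by finiteness), ← ENNReal.toReal_rpow]
    simp
  obtain ⟨c, hc⟩ := hG.exists_lintegral_edist_rpow_le hμ hs hp hspQ hr₀ hb.le hτ hGτ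
  rw [← htoReal]
  exact ciInf_le_of_le ⟨0, by rintro _ ⟨c, rfl⟩; positivity⟩ c
    (toReal_average_rpow_inv_le (by positivity) (sobolevExponent_pos hp hQ hspQ) hB hfin htwo hc)

theorem IsHajlaszGradient.iInf_average_edist_rpow_le {Y : Type*} [PseudoMetricSpace Y] {u : X → Y}
    (hG : IsHajlaszGradient μ (ball x₀ (2 * r₀)) s u G)
    (hμ : HasLowerMeasureBound μ (ball x₀ (2 * r₀)) b Q) (hs : 0 < s) (hp : 0 < p)
    (hspQ : s * p < Q) (hr₀ : 0 < r₀) (hb : 0 < b) (hfin : μ (ball x₀ r₀) ≠ ⊤)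
    (hGp : ∫⁻ x in ball x₀ (2 * r₀), G x ^ p ∂μ ≠ ⊤) :
    (⨅ c : Y, ((μ (ball x₀ r₀)).toReal⁻¹ *
        (∫⁻ x in ball x₀ r₀, edist (u x) c ^ sobolevExponent s p Q ∂μ).toReal) ^
          (sobolevExponent s p Q)⁻¹) ≤
      sobolevPoincareConst s p Q * r₀ ^ s *
        ((∫⁻ x in ball x₀ (2 * r₀), G x ^ p ∂μ).toReal / (b * r₀ ^ Q)) ^ p⁻¹ := by
  have hQ : 0 < Q := (mul_pos hs hp).trans hspQ
  have hθ := sub_pos.2 (radiusRatio_lt_one hp hQ)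
  set I := ∫⁻ x in ball x₀ (2 * r₀), G x ^ p ∂μ
  set D := oscillationConst s p Q * (1 + 2 ^ p) ^ (sobolevExponent s p Q)⁻¹ * r₀ ^ s with hDdef
  have hD : 0 < D := by have := oscillationConst_pos hQ hspQ; positivity
  have hcritical : (I.toReal / (b * ((1 - radiusRatio p Q) * r₀) ^ Q)) ^ p⁻¹ =
      ((1 - radiusRatio p Q) ^ Q)⁻¹ ^ p⁻¹ * (I.toReal / (b * r₀ ^ Q)) ^ p⁻¹ := by
    rw [← Real.mul_rpow (by positivity) (by positivity), Real.mul_rpow hθ.le hr₀.le]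
    congr 1
    field_simp
  have hconst : sobolevPoincareConst s p Q * r₀ ^ s * (I.toReal / (b * r₀ ^ Q)) ^ p⁻¹ =
      D * (I.toReal / (b * ((1 - radiusRatio p Q) * r₀) ^ Q)) ^ p⁻¹ := by
    rw [hcritical, sobolevPoincareConst, hDdef]
    ring
  rw [hconst, ← div_le_iff₀' hD]
  refine le_of_forall_gt_imp_ge_of_dense fun τ hτ => ?_
  rw [div_le_iff₀' hD]
  refine (hG.iInf_average_edist_rpow_le_mul_level hμ hs hp hspQ hr₀ hb hfin
    (lt_of_le_of_lt (by positivity) hτ)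
    (lt_ofReal_mul_rpow_of_rpow_inv_lt hGp (by positivity) hp hτ)).trans_eq ?_
  rw [hDdef]
  ring

theorem sobolev_poincare_embedding_TL_general {F : Type*} [NormedAddCommGroup F] {u : X → F}
    (hs : 0 < s) (hp : 0 < p) (hspQ : s * p < Q) (hr₀ : 0 < r₀) (hb : 0 < b)
    (hμ : HasLowerMeasureBound μ (ball x₀ (2 * r₀)) b Q)
    (hu : AEStronglyMeasurable u (μ.restrict (ball x₀ r₀)))
    (hG : IsHajlaszGradient μ (ball x₀ (2 * r₀)) s u G)
    (hGp : ∫⁻ x in ball x₀ (2 * r₀), G x ^ p ∂μ ≠ ⊤) (hfin : μ (ball x₀ (2 * r₀)) ≠ ⊤) :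
    MemLp u (ENNReal.ofReal (sobolevExponent s p Q)) (μ.restrict (ball x₀ r₀)) ∧
      (⨅ c : F, ((μ (ball x₀ r₀)).toReal⁻¹ *
          (∫⁻ x in ball x₀ r₀, ‖u x - c‖ₑ ^ sobolevExponent s p Q ∂μ).toReal) ^
            (sobolevExponent s p Q)⁻¹) ≤
        sobolevPoincareConst s p Q * ((μ (ball x₀ (2 * r₀))).toReal / (b * r₀ ^ Q)) ^ (1 / p) *
          r₀ ^ s * ((μ (ball x₀ (2 * r₀))).toReal⁻¹ *
            (∫⁻ x in ball x₀ (2 * r₀), G x ^ p ∂μ).toReal) ^ (1 / p) := by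
  have hB : μ (ball x₀ r₀) ≠ ⊤ := measure_ne_top_of_subset (ball_subset_ball (by linarith)) hfin
  refine ⟨hG.memLp_sobolevExponent hμ hs hp hspQ hr₀ hb hu hB hGp, ?_⟩
  have hm : 0 < (μ (ball x₀ (2 * r₀))).toReal :=
    ENNReal.toReal_pos (hμ.measure_ball_ne_zero hb (by positivity) subset_rfl) hfin
  simp_rw [← edist_eq_enorm_sub]
  refine (hG.iInf_average_edist_rpow_le hμ hs hp hspQ hr₀ hb hB hGp).trans_eq ?_
  rw [mul_right_comm _ _ (r₀ ^ s), mul_assoc _ (_ ^ (1 / p)),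
    ← Real.mul_rpow (by positivity) (by positivity), one_div]
  congr 2
  field_simp

end Embedding

/-- Sobolev–Poincaré embedding on balls (part 1 of Theorem 3.1): under the measure
lower bound `μ(B(x,r)) ≥ b r^Q` on sub-balls of `2B₀` and `0 < sp < Q`, a function
with fractional `s`-gradient `(g_j)` of finite `L^p(ℓ^q)`-norm belongs to
`L^{p*}(B₀)`, `p* = Qp/(Q−sp)`, with
`inf_c (⨍_{B₀}|u−c|^{p*})^{1/p*} ≤ C (μ(2B₀)/(b r₀^Q))^{1/p} r₀^s
(⨍_{2B₀}(∑_j g_j^q)^{p/q})^{1/p}`. -/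
theorem sobolev_poincare_embedding_TL
    (s p q Q : ℝ) (hs : 0 < s) (hp : 0 < p) (hq : 0 < q) (hQ : 0 < Q)
    (hspQ : s * p < Q) :
    ∃ C : ℝ, 0 < C ∧
      ∀ (X : Type) [inst : MetricSpace X] [instm : MeasurableSpace X]
        [instb : BorelSpace X] (μ : Measure X)
        (x₀ : X) (r₀ b : ℝ) (u : X → ℝ) (g : ℤ → X → ℝ),
        0 < r₀ → 0 < b →
        (∀ (x : X) (r : ℝ), 0 < r → ball x r ⊆ ball x₀ (2 * r₀) →
          ENNReal.ofReal (b * r ^ Q) ≤ μ (ball x r)) →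
        Measurable u →
        IsFractionalSGradient μ (ball x₀ (2 * r₀)) s u g →
        (∫⁻ x in ball x₀ (2 * r₀),
            (∑' j : ℤ, ENNReal.ofReal (g j x) ^ q) ^ (p / q) ∂μ) < ⊤ →
        0 < μ (ball x₀ (2 * r₀)) → μ (ball x₀ (2 * r₀)) < ⊤ →
        ((∫⁻ x in ball x₀ r₀,
            ENNReal.ofReal (|u x|) ^ (Q * p / (Q - s * p)) ∂μ) < ⊤ ∧
         (⨅ cc : ℝ,
            (((μ (ball x₀ r₀)).toReal)⁻¹ *
              (∫⁻ x in ball x₀ r₀,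
                ENNReal.ofReal (|u x - cc|) ^ (Q * p / (Q - s * p)) ∂μ).toReal) ^
              ((Q - s * p) / (Q * p))) ≤
            C * ((μ (ball x₀ (2 * r₀))).toReal / (b * r₀ ^ Q)) ^ (1 / p) * r₀ ^ s *
              (((μ (ball x₀ (2 * r₀))).toReal)⁻¹ *
                (∫⁻ x in ball x₀ (2 * r₀),
                  (∑' j : ℤ, ENNReal.ofReal (g j x) ^ q) ^ (p / q) ∂μ).toReal) ^ (1 / p)) := by
  have hP : 0 < sobolevExponent s p Q := sobolevExponent_pos hp hQ hspQ
  refine ⟨sobolevPoincareConst s p Q, sobolevPoincareConst_pos hp hQ hspQ, ?_⟩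
  intro X _ _ _ μ x₀ r₀ b u g hr₀ hb hμ hu hg hgp _ hfin
  have hrpow (x : X) : (∑' j, ENNReal.ofReal (g j x) ^ q) ^ (p / q) =
      ((∑' j, ENNReal.ofReal (g j x) ^ q) ^ q⁻¹) ^ p := by
    rw [← ENNReal.rpow_mul, inv_mul_eq_div]
  simp_rw [hrpow, ← Real.enorm_eq_ofReal_abs] at hgp ⊢
  rw [← inv_sobolevExponent, ← sobolevExponent]
  obtain ⟨hmem, hle⟩ := sobolev_poincare_embedding_TL_general hs hp hspQ hr₀ hb hμ
    hu.aestronglyMeasurable (hg.isHajlaszGradient hq) hgp.ne hfin.ne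
  refine ⟨?_, hle⟩
  simpa only [ENNReal.toReal_ofReal hP.le] using lintegral_rpow_enorm_lt_top_of_eLpNorm_lt_top
    (ENNReal.ofReal_pos.2 hP).ne' ENNReal.ofReal_ne_top hmem.2
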